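/- Let n ≥ 1 be an integer. For every f ∈ H² and every z ∈ 𝔻, one has (V_n(T_n f))(z) = z · (V_n f)(z). That is, V_n intertwines T_n on H² with the multiplication operator M_z (multiplication by the coordinate function z) on ₀S_n², so T_n is similar under V_n to M_z acting on ₀S_n². -/

import Mathlib

open Metric Filter

/-- Taylor coefficient `a_k(f) = f^{(k)}(0)/k!`. -/
noncomputable def hardyCoeff (f : ℂ → ℂ) (k : ℕ) : ℂ :=
  iteratedDeriv k f 0 / (Nat.factorial k)

/-- `f ∈ H²`: analytic on the open unit disk with square-summable Taylor coefficients. -/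
def MemH2 (f : ℂ → ℂ) : Prop :=
  AnalyticOnNhd ℂ f (ball (0 : ℂ) 1) ∧ Summable fun k => ‖hardyCoeff f k‖ ^ 2

/-- The Hardy space norm `‖f‖_{H²}`. -/
noncomputable def normH2 (f : ℂ → ℂ) : ℝ :=
  Real.sqrt (∑' k, ‖hardyCoeff f k‖ ^ 2)

/-- `f ∈ S_n²`: `f ∈ H²` and `f^{(n)} ∈ H²`. -/
def MemS (n : ℕ) (f : ℂ → ℂ) : Prop :=
  MemH2 f ∧ MemH2 (iteratedDeriv n f)

/-- The norm `‖f‖_{S_n²} = (‖f^{(n)}‖² + ‖f‖²)^{1/2}`. -/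
noncomputable def normS (n : ℕ) (f : ℂ → ℂ) : ℝ :=
  Real.sqrt (normH2 (iteratedDeriv n f) ^ 2 + normH2 f ^ 2)

/-- `f ∈ ₀S_n²`: `f ∈ S_n²` with `f^{(i)}(0) = 0` for `0 ≤ i ≤ n-1`. -/
def Mem0S (n : ℕ) (f : ℂ → ℂ) : Prop :=
  MemS n f ∧ ∀ i < n, iteratedDeriv i f 0 = 0

/-- Complex Riemann–Liouville integral `V_n`. -/
noncomputable def Vn (n : ℕ) (f : ℂ → ℂ) (z : ℂ) : ℂ :=
  z ^ n / (Nat.factorial (n - 1)) *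
    ∫ t in (0:ℝ)..1, ((1 - t : ℝ) : ℂ) ^ (n - 1) * f ((t : ℂ) * z)

/-- The operator `T_n f = z f(z) + n ∫₀^z f(w) dw`. -/
noncomputable def Tn (n : ℕ) (f : ℂ → ℂ) (z : ℂ) : ℂ :=
  z * f z + n * (z * ∫ t in (0:ℝ)..1, f ((t : ℂ) * z))

/-!
Everything is read off from Taylor coefficients. If `f = ∑ a_k z^k` on the unit disk, then
integrating term by term and evaluating the Beta integral
`∫₀¹ (1-t)^{n-1} t^k dt = (n-1)! k! / (n+k)!` gives

  `V_n f (z) = ∑ a_k * k! / (k+n)! * z^(k+n)`   (`hasSum_Vn`).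

The map `T_n` sends `z^k` to `(k+1+n)/(k+1) * z^(k+1)` (`hasSum_Tn`), so `V_n T_n` sends `z^k` to
`k!/(k+n)! * z^(k+1+n)`, which is `z` times `V_n (z^k)`; this is the intertwining relation.

The expansion of `V_n f` also shows that its first `n` coefficients vanish, that its
later coefficients are dominated by those of `f`, and that `(V_n f)^{(n)}` has the same Taylor
coefficients as `f`. Hence `V_n f ∈ ₀S_n²`.
-/

/-- `f` is the sum of the power series `∑ a_k z^k` on the open unit disk. -/
def HasDiskSeries (f : ℂ → ℂ) (a : ℕ → ℂ) : Prop :=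
  ∀ z ∈ ball (0 : ℂ) 1, HasSum (fun k => a k * z ^ k) (f z)

lemma hasDiskSeries_of_analyticOnNhd {f : ℂ → ℂ} (hf : AnalyticOnNhd ℂ f (ball (0 : ℂ) 1)) :
    HasDiskSeries f (hardyCoeff f) := by
  intro z hz
  have h := Complex.hasSum_taylorSeries_on_ball hf.differentiableOn hz
  refine HasSum.congr_fun h fun k => ?_
  simp only [hardyCoeff, sub_zero, smul_eq_mul]
  ring

lemma HasDiskSeries.hasFPowerSeriesOnBall {f : ℂ → ℂ} {a : ℕ → ℂ} (h : HasDiskSeries f a) :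
    HasFPowerSeriesOnBall f (FormalMultilinearSeries.ofScalars ℂ a) 0 1 where
  r_le := by
    refine ENNReal.le_of_forall_nnreal_lt fun r hr => ?_
    have hr1 : (r : ℝ) < 1 := by exact_mod_cast hr
    apply FormalMultilinearSeries.le_radius_of_summable_norm
    have hs := (h (r : ℂ) (by simpa using hr1)).summable.norm
    refine hs.congr fun k => ?_
    rw [FormalMultilinearSeries.ofScalars_norm]
    simp
  r_pos := by simp
  hasSum := by
    intro y hy
    have hy1 : y ∈ ball (0 : ℂ) 1 := by
      rw [← ENNReal.ofReal_one, Metric.eball_ofReal] at hy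
      exact hy
    have := h y hy1
    simpa [FormalMultilinearSeries.ofScalars_apply_eq, mul_comm] using this

lemma HasDiskSeries.analyticOnNhd {f : ℂ → ℂ} {a : ℕ → ℂ} (h : HasDiskSeries f a) :
    AnalyticOnNhd ℂ f (ball (0 : ℂ) 1) := by
  have := h.hasFPowerSeriesOnBall.analyticOnNhd
  rwa [← ENNReal.ofReal_one, Metric.eball_ofReal] at this

lemma HasDiskSeries.hardyCoeff_eq {f : ℂ → ℂ} {a : ℕ → ℂ} (h : HasDiskSeries f a) (k : ℕ) :
    hardyCoeff f k = a k := by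
  have h1 := h.hasFPowerSeriesOnBall.hasFPowerSeriesAt
  have h2 := h1.analyticAt.hasFPowerSeriesAt
  have h3 := FormalMultilinearSeries.ofScalars_series_injective ℂ ℂ
    (h2.eq_formalMultilinearSeries h1)
  exact congrFun h3 k

/-- The Beta integral at integer parameters. -/
lemma integral_one_sub_pow_mul_pow (m k : ℕ) :
    ∫ t in (0:ℝ)..1, ((1 - t : ℝ) : ℂ) ^ m * (t : ℂ) ^ k
      = (m.factorial : ℂ) * k.factorial / (k + (m + 1)).factorial := by
  have hk : (0 : ℝ) < ((k : ℂ) + 1).re := by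
    simp only [Complex.add_re, Complex.natCast_re, Complex.one_re]; positivity
  have hm : (0 : ℝ) < ((m : ℂ) + 1).re := by
    simp only [Complex.add_re, Complex.natCast_re, Complex.one_re]; positivity
  have h := Complex.Gamma_mul_Gamma_eq_betaIntegral hk hm
  have hs : (k : ℂ) + 1 + (m + 1) = ((k + (m + 1) : ℕ) : ℂ) + 1 := by push_cast; ring
  rw [hs, Complex.Gamma_nat_eq_factorial, Complex.Gamma_nat_eq_factorial,
    Complex.Gamma_nat_eq_factorial] at h
  have hB : Complex.betaIntegral ((k : ℂ) + 1) (m + 1)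
      = ∫ t in (0:ℝ)..1, ((1 - t : ℝ) : ℂ) ^ m * (t : ℂ) ^ k := by
    rw [Complex.betaIntegral]
    congr 1
    funext t
    simp only [add_sub_cancel_right, Complex.cpow_natCast]
    push_cast
    ring
  rw [← hB, eq_div_iff (by exact_mod_cast Nat.factorial_ne_zero _), mul_comm, ← h, mul_comm]

/-- Term-by-term action of the Riemann–Liouville integral on a power series. The order is
`m + 1`. -/
lemma HasDiskSeries.hasSum_Vn {f : ℂ → ℂ} {a : ℕ → ℂ} (h : HasDiskSeries f a) (m : ℕ) {z : ℂ}
    (hz : z ∈ ball (0 : ℂ) 1) :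
    HasSum (fun k => a k * (k.factorial / (k + (m + 1)).factorial) * z ^ (k + (m + 1)))
      (Vn (m + 1) f z) := by
  have hI : HasSum
      (fun k => ∫ t in (0:ℝ)..1, ((1 - t : ℝ) : ℂ) ^ m * (a k * ((t : ℂ) * z) ^ k))
      (∫ t in (0:ℝ)..1, ((1 - t : ℝ) : ℂ) ^ m * f ((t : ℂ) * z)) := by
    refine intervalIntegral.hasSum_integral_of_dominated_convergence
      (fun k _ => ‖a k * z ^ k‖) (fun k => ?_) (fun k => ?_) ?_ ?_ ?_
    · exact Continuous.aestronglyMeasurable (by fun_prop)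
    · refine .of_forall fun t ht => ?_
      rw [Set.uIoc_of_le zero_le_one] at ht
      have h1 : ‖((1 - t : ℝ) : ℂ)‖ ≤ 1 := by
        rw [Complex.norm_real, Real.norm_eq_abs, abs_le]; constructor <;> linarith [ht.1, ht.2]
      have h2 : ‖(t : ℂ)‖ ≤ 1 := by
        rw [Complex.norm_real, Real.norm_eq_abs, abs_le]; constructor <;> linarith [ht.1, ht.2]
      calc ‖((1 - t : ℝ) : ℂ) ^ m * (a k * ((t : ℂ) * z) ^ k)‖
          = ‖((1 - t : ℝ) : ℂ)‖ ^ m * ‖(t : ℂ)‖ ^ k * ‖a k * z ^ k‖ := by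
            simp only [norm_mul, norm_pow]; ring
        _ ≤ 1 * ‖a k * z ^ k‖ := by
            gcongr
            exact mul_le_one₀ (pow_le_one₀ (norm_nonneg _) h1) (by positivity)
              (pow_le_one₀ (norm_nonneg _) h2)
        _ = _ := one_mul _
    · exact .of_forall fun t _ => (h z hz).summable.norm
    · exact intervalIntegrable_const
    · refine .of_forall fun t ht => ?_
      rw [Set.uIoc_of_le zero_le_one] at ht
      refine (h _ ?_).mul_left _
      rw [mem_ball_zero_iff] at hz ⊢
      rw [norm_mul, Complex.norm_real, Real.norm_eq_abs, abs_of_pos ht.1]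
      exact lt_of_le_of_lt (mul_le_of_le_one_left (norm_nonneg _) ht.2) hz
  have hJ := hI.mul_left (z ^ (m + 1) / (m.factorial : ℂ))
  simp only [Vn, Nat.add_sub_cancel]
  refine HasSum.congr_fun hJ fun k => ?_
  have : ∀ t : ℝ, ((1 - t : ℝ) : ℂ) ^ m * (a k * ((t : ℂ) * z) ^ k)
      = (a k * z ^ k) * (((1 - t : ℝ) : ℂ) ^ m * (t : ℂ) ^ k) := fun t => by ring
  simp only [this, intervalIntegral.integral_const_mul, integral_one_sub_pow_mul_pow]
  have hm : (m.factorial : ℂ) ≠ 0 := by exact_mod_cast Nat.factorial_ne_zero _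
  field_simp
  ring

/-- Coefficients of `T_n f`: the shift contributes `a_k` and the primitive
`n * a_k / (k + 1)` to the coefficient of `z ^ (k + 1)`. -/
lemma HasDiskSeries.hasSum_Tn {f : ℂ → ℂ} {a : ℕ → ℂ} (h : HasDiskSeries f a) (n : ℕ) {z : ℂ}
    (hz : z ∈ ball (0 : ℂ) 1) :
    HasSum (fun k => a k * ((k + 1 + n) / (k + 1)) * z ^ (k + 1)) (Tn n f z) := by
  -- The primitive of `f` vanishing at `0` is `V_1 f`.
  have hV : Vn 1 f z = z * ∫ t in (0:ℝ)..1, f ((t : ℂ) * z) := by simp [Vn]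
  have h1 := ((h z hz).mul_left z).add ((h.hasSum_Vn 0 hz).mul_left (n : ℂ))
  rw [zero_add, hV] at h1
  refine HasSum.congr_fun h1 fun k => ?_
  have hk : (k : ℂ) + 1 ≠ 0 := by exact_mod_cast Nat.succ_ne_zero k
  have hf : (k.factorial : ℂ) ≠ 0 := by exact_mod_cast Nat.factorial_ne_zero _
  rw [Nat.factorial_succ]
  push_cast
  field_simp
  ring

/-- Adds `n` leading zero coefficients. -/
def shiftCoeff (n : ℕ) (b : ℕ → ℂ) (k : ℕ) : ℂ := if k < n then 0 else b (k - n)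

lemma shiftCoeff_of_lt {n k : ℕ} (b : ℕ → ℂ) (hk : k < n) : shiftCoeff n b k = 0 := if_pos hk

lemma shiftCoeff_add (n k : ℕ) (b : ℕ → ℂ) : shiftCoeff n b (k + n) = b k := by
  simp [shiftCoeff]

lemma hasDiskSeries_shiftCoeff {g : ℂ → ℂ} {b : ℕ → ℂ} (n : ℕ)
    (h : ∀ z ∈ ball (0 : ℂ) 1, HasSum (fun k => b k * z ^ (k + n)) (g z)) :
    HasDiskSeries g (shiftCoeff n b) := by
  intro z hz
  rw [← hasSum_nat_add_iff' n]
  have h0 : ∑ i ∈ Finset.range n, shiftCoeff n b i * z ^ i = 0 :=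
    Finset.sum_eq_zero fun i hi => by
      rw [shiftCoeff_of_lt b (Finset.mem_range.1 hi), zero_mul]
  simpa only [h0, sub_zero, shiftCoeff_add] using h z hz

lemma hardyCoeff_iteratedDeriv (n k : ℕ) (g : ℂ → ℂ) :
    hardyCoeff (iteratedDeriv n g) k
      = hardyCoeff g (k + n) * ((k + n).factorial / k.factorial) := by
  have hk : (k.factorial : ℂ) ≠ 0 := by exact_mod_cast Nat.factorial_ne_zero _
  have hkn : ((k + n).factorial : ℂ) ≠ 0 := by exact_mod_cast Nat.factorial_ne_zero _
  have : iteratedDeriv k (iteratedDeriv n g) = iteratedDeriv (k + n) g := by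
    simp only [iteratedDeriv_eq_iterate, Function.iterate_add_apply]
  simp only [hardyCoeff, this]
  field_simp

lemma Vn_Tn_eq (m : ℕ) {f : ℂ → ℂ} {a : ℕ → ℂ} (h : HasDiskSeries f a) {z : ℂ}
    (hz : z ∈ ball (0 : ℂ) 1) : Vn (m + 1) (Tn (m + 1) f) z = z * Vn (m + 1) f z := by
  have hT := hasDiskSeries_shiftCoeff 1 fun w hw => h.hasSum_Tn (m + 1) hw
  have h1 := (hasSum_nat_add_iff' 1).2 (hT.hasSum_Vn m hz)
  simp only [Finset.sum_range_one, shiftCoeff_of_lt _ Nat.zero_lt_one, zero_mul, sub_zero,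
    shiftCoeff_add] at h1
  refine h1.unique ?_
  refine HasSum.congr_fun ((h.hasSum_Vn m hz).mul_left z) fun k => ?_
  have e1 : (k + 1).factorial = (k + 1) * k.factorial := Nat.factorial_succ k
  have e2 : (k + 1 + (m + 1)).factorial = (k + 1 + (m + 1)) * (k + (m + 1)).factorial := by
    rw [Nat.add_right_comm, Nat.factorial_succ]
  have hne : ((k + (m + 1)).factorial : ℂ) ≠ 0 := by exact_mod_cast Nat.factorial_ne_zero _
  have hk : (k : ℂ) + 1 ≠ 0 := by exact_mod_cast Nat.succ_ne_zero k
  have hkm : (k : ℂ) + 1 + (m + 1) ≠ 0 := by exact_mod_cast Nat.succ_ne_zero (k + 1 + m)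
  rw [e1, e2]
  push_cast
  field_simp
  ring

lemma mem0S_Vn (m : ℕ) {f : ℂ → ℂ} (hf : MemH2 f) : Mem0S (m + 1) (Vn (m + 1) f) := by
  have h := hasDiskSeries_of_analyticOnNhd hf.1
  have hV := hasDiskSeries_shiftCoeff (m + 1) fun w hw => h.hasSum_Vn m hw
  refine ⟨⟨⟨hV.analyticOnNhd, ?_⟩, ?_, ?_⟩, fun i hi => ?_⟩
  · rw [← summable_nat_add_iff (m + 1)]
    refine hf.2.of_nonneg_of_le (fun _ => by positivity) fun k => ?_
    rw [hV.hardyCoeff_eq, shiftCoeff_add, norm_mul]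
    have hle : ‖((k.factorial : ℂ) / (k + (m + 1)).factorial)‖ ≤ 1 := by
      rw [norm_div, Complex.norm_natCast, Complex.norm_natCast]
      refine div_le_one_of_le₀ ?_ (by positivity)
      exact_mod_cast Nat.factorial_le (Nat.le_add_right _ _)
    gcongr
    exact mul_le_of_le_one_right (norm_nonneg _) hle
  · rw [iteratedDeriv_eq_iterate]
    exact hV.analyticOnNhd.iterated_deriv _
  · refine hf.2.congr fun k => ?_
    have hk : (k.factorial : ℂ) ≠ 0 := by exact_mod_cast Nat.factorial_ne_zero _
    have hkn : ((k + (m + 1)).factorial : ℂ) ≠ 0 := by exact_mod_cast Nat.factorial_ne_zero _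
    rw [hardyCoeff_iteratedDeriv, hV.hardyCoeff_eq, shiftCoeff_add]
    congr 2
    field_simp
  · have hi0 := hV.hardyCoeff_eq i
    rw [shiftCoeff_of_lt _ hi, hardyCoeff, div_eq_zero_iff] at hi0
    exact hi0.resolve_right (by exact_mod_cast Nat.factorial_ne_zero _)

/-- For `n ≥ 1` and `f ∈ H²`, `(V_n (T_n f))(z) = z·(V_n f)(z)` on the disk:
`V_n` intertwines `T_n` on `H²` with multiplication by `z` on `₀S_n²` (and indeed
`V_n f ∈ ₀S_n²`), so `T_n` is similar under `V_n` to `M_z` on `₀S_n²`. -/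
theorem stmt12 (n : ℕ) (hn : 1 ≤ n) (f : ℂ → ℂ) (hf : MemH2 f) :
    (∀ z ∈ ball (0 : ℂ) 1, Vn n (Tn n f) z = z * Vn n f z) ∧ Mem0S n (Vn n f) := by
  obtain ⟨m, rfl⟩ := Nat.exists_eq_add_of_le' hn
  exact ⟨fun z hz => Vn_Tn_eq m (hasDiskSeries_of_analyticOnNhd hf.1) hz, mem0S_Vn m hf⟩
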